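/- In the Hecke algebra of $S_n$ over $\mathcal{L} = \mathbb{Z}[v,v^{-1}]$ acting on $\mathcal{L}[x_1^{\pm1},\ldots,x_n^{\pm1}]$ by the Demazure–Lusztig operators $H_i(\xi) = v^{-1}s_i(\xi) + (v^{-1}-v)\, x_i \frac{\xi - s_i(\xi)}{x_i - x_{i+1}}$, for every $w \in S_n$ and $\tau \in \mathbb{Z}^n$ one has $H_w(x^\tau) \in v^{\ell(w) - 2k}\, x^{w(\tau)} + \sum_{\eta < w(\tau)} \mathcal{L}\, x^\eta$, where $k = \#\{\alpha \in \Delta_f^+ : w\alpha < 0,\ \alpha(\tau) \ge 0\}$. -/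

import Mathlib

/-! The proof is by induction on the reduced word, removing its last letter.

Write `w = u s_i` with `ℓ(w) = ℓ(u) + 1`, so that `p = u(i) < q = u(i+1)`.  A telescoping sum computes
`H_i x^τ` explicitly (`H_mono_ge`, `H_mono_lt`): it is `v^{±1} x^{s_i τ}`, with exponent `-1` exactly
when `τ_i ≥ τ_{i+1}`, plus a combination of monomials `x^η` with `η` on the segment from `τ` to
`s_i τ`.  The point `uη` is carried to `u s_i τ` by a single affine reflection in a root whose finite
part is `±(ε_p - ε_q)`, and `p < q` makes `uη < u s_i τ` (`H_mono_sub_mem`).  Applying the induction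
hypothesis for `u` to `s_i τ` gives the leading term, and to each `η` gives terms `≤ uη < wτ`.  The
exponent of `v` follows the recursion `cnt_mul_sw`: the inversions of `u s_i` are `ε_i - ε_{i+1}` and
the `s_i`-images of the inversions of `u`.

The input from Bruhat order is `xlt_of_reflection`: if `β` is a positive affine root with
`β(η) > 0`, then `η < s_β η`.  Let `m` be minimal in the coset of `s_β η` and `y = s_β m`, an element
of the coset of `η`.  The root `m⁻¹β` has constant term `-β(η) < 0`, hence is negative, so `y < m`,
while `m_η ≤ y` because a minimal representative lies below its whole coset (`minRep_le`).  The latter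
holds since an element of `t_η Sₙ` whose window is not increasing can be lowered by a finite
reflection, and only one element of the coset has an increasing window.  Both arguments use that
`ℓ(x s_γ) > ℓ(x)` when `γ` and `xγ` are positive (`len_lt_of_pos`), proved by an injection of inversion
sets.  Positivity of a root `(i, j, k)` is tested by the integer `j - i + n k`, which turns these
root computations into linear arithmetic.
-/


/-- An element `t_τ ∘ u` of the extended affine Weyl group `W = Sₙ ⋉ ℤⁿ`
of type `A_{n-1}`:  `perm` is the finite part `u ∈ Sₙ`, `tr` the translation `τ`. -/
structure AffW (n : ℕ) where
  perm : Equiv.Perm (Fin n)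
  tr : Fin n → ℤ

namespace AffW

variable {n : ℕ}

/-- The affine action on `X = ℤⁿ` : `(t_τ u)(x) = u·x + τ` where `(u·x)_i = x_{u⁻¹ i}`. -/
def act (w : AffW n) (x : Fin n → ℤ) : Fin n → ℤ :=
  fun i => x (w.perm⁻¹ i) + w.tr i

/-- Group multiplication (composition of affine maps). -/
def mul (a b : AffW n) : AffW n :=
  ⟨a.perm * b.perm, fun i => b.tr (a.perm⁻¹ i) + a.tr i⟩

def one (n : ℕ) : AffW n := ⟨1, 0⟩

/-- An affine root `ε_i - ε_j + k`, recorded as the data `(i, j, k)`. -/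
abbrev Root (n : ℕ) := Fin n × Fin n × ℤ

/-- A positive affine root: `Δ⁺ = Δ_f⁺ ∪ (Δ_f + ℤ_{>0})`. -/
def IsPos (α : Root n) : Prop := 0 < α.2.2 ∨ (α.2.2 = 0 ∧ α.1 < α.2.1)

/-- A negative affine root. -/
def IsNeg (α : Root n) : Prop := IsPos (α.2.1, α.1, -α.2.2)

/-- Action of `w` on affine roots, determined by `(wα)(x) = α(w⁻¹x)`. -/
def rootAct (w : AffW n) (α : Root n) : Root n :=
  (w.perm α.1, w.perm α.2.1, α.2.2 - w.tr (w.perm α.1) + w.tr (w.perm α.2.1))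

/-- The length `ℓ(w) = #{α ∈ Δ⁺ ∣ wα ∈ -Δ⁺}`. -/
noncomputable def len (w : AffW n) : ℕ :=
  Set.ncard {α : Root n | IsPos α ∧ IsNeg (rootAct w α)}

/-- The affine reflection `s_{ε_i - ε_j + k}` as an element of `W`. -/
def refl (i j : Fin n) (k : ℤ) : AffW n :=
  ⟨Equiv.swap i j, fun m => if m = i then -k else if m = j then k else 0⟩

/-- Bruhat covering-type relation: right multiplication by a reflection which
increases the length. -/
def BruhatStep (a b : AffW n) : Prop :=
  (∃ i j k, i ≠ j ∧ b = mul a (refl i j k)) ∧ len a < len b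

/-- The Bruhat order on the extended affine Weyl group. -/
def BruhatLe : AffW n → AffW n → Prop := Relation.ReflTransGen BruhatStep

/-- `m_τ`, the shortest element of the coset `t_τ Sₙ`. -/
noncomputable def minRep (τ : Fin n → ℤ) : AffW n :=
  ⟨(Finset.exists_min_image (Finset.univ : Finset (Equiv.Perm (Fin n)))
      (fun u => len (⟨u, τ⟩ : AffW n)) ⟨1, Finset.mem_univ 1⟩).choose, τ⟩

/-- The Bruhat order on `X = ℤⁿ` induced from the extended affine Weyl group:
`τ ≤ η ↔ m_τ ≤ m_η`. -/
noncomputable def XLe (τ η : Fin n → ℤ) : Prop := BruhatLe (minRep τ) (minRep η)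

end AffW

open LaurentPolynomial

/-- The coefficient ring `𝓛 = ℤ[v, v⁻¹]`. -/
abbrev LL : Type := LaurentPolynomial ℤ

/-- Laurent polynomials `𝓛[x₁^{±1}, …, x_N^{±1}]`. -/
abbrev LP (N : ℕ) : Type := AddMonoidAlgebra LL (Fin N →₀ ℤ)

namespace LP

variable {N : ℕ}

/-- The variable `x_j`. -/
noncomputable def Xv (j : Fin N) : LP N :=
  AddMonoidAlgebra.single (Finsupp.single j 1) 1

/-- The action of a permutation `σ ∈ S_N` on Laurent polynomials by permuting
the variables: `x^τ ↦ x^{σ(τ)}`. -/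
noncomputable def permAct (σ : Equiv.Perm (Fin N)) : LP N →+* LP N :=
  AddMonoidAlgebra.mapDomainRingHom LL (Finsupp.mapDomain.addMonoidHom σ)

/-- The monomial `x^τ`. -/
noncomputable def mono (τ : Fin N → ℤ) : LP N :=
  AddMonoidAlgebra.single (Finsupp.equivFunOnFinite.symm τ) 1

/-- A family `H i` of `𝓛`-linear operators is a family of Demazure–Lusztig
operators if it satisfies, after clearing the denominator `x_i - x_{i+1}`, the
defining identity
`H_i(ξ) = v⁻¹ s_i(ξ) + (v⁻¹ - v)·x_i·(ξ - s_i ξ)/(x_i - x_{i+1})`. -/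
def IsDL {n : ℕ} (H : Fin n → (LP (n + 1) →ₗ[LL] LP (n + 1))) : Prop :=
  ∀ (i : Fin n) (ξ : LP (n + 1)),
    (Xv i.castSucc - Xv i.succ) * H i ξ =
      (T (-1) : LL) • ((Xv i.castSucc - Xv i.succ) *
        permAct (Equiv.swap i.castSucc i.succ) ξ) +
      ((T (-1) - T 1 : LL)) • (Xv i.castSucc *
        (ξ - permAct (Equiv.swap i.castSucc i.succ) ξ))

end LP

namespace AffW

variable {n : ℕ}

/-! ### Windows, inversions and lengths in the extended affine Weyl group -/

/-- The linear functional `(i, j, k) ↦ g j - g i + n k` on affine roots attached to a window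
`g : Fin n → ℤ`. -/
def ht (g : Fin n → ℤ) (α : Root n) : ℤ := g α.2.1 - g α.1 + n * α.2.2

/-- The window of the identity, `i ↦ i`. -/
def idWin (n : ℕ) : Fin n → ℤ := fun i => (i : ℤ)

/-- The window of `x = t_τ u`, namely `i ↦ u(i) + n τ_{u(i)}`: the values on
`1, …, n` of the affine permutation of `ℤ` attached to `x`, with indices starting at `0`. -/
def win (x : AffW n) : Fin n → ℤ := fun i => (x.perm i : ℤ) + n * x.tr (x.perm i)

/-- A root `(i, j, k)` is positive exactly when `j - i + n k > 0`, since `|j - i| < n`. -/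
theorem isPos_iff (α : Root n) : IsPos α ↔ 0 < ht (idWin n) α := by
  obtain ⟨i, j, k⟩ := α
  have hi : (i : ℤ) < n := by exact_mod_cast i.2
  have hj : (j : ℤ) < n := by exact_mod_cast j.2
  have hi0 : (0 : ℤ) ≤ i := by positivity
  have hj0 : (0 : ℤ) ≤ j := by positivity
  simp only [IsPos, ht, idWin, Fin.lt_def]
  constructor
  · rintro (h | ⟨rfl, h⟩)
    · nlinarith
    · zify at h; linarith
  · intro h
    rcases lt_trichotomy k 0 with hk | rfl | hk
    · nlinarith
    · right; exact ⟨rfl, by zify; linarith⟩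
    · left; exact hk

theorem isNeg_iff (α : Root n) : IsNeg α ↔ ht (idWin n) α < 0 := by
  rw [IsNeg, isPos_iff]
  simp only [ht]
  constructor <;> intro h <;> linarith

theorem ht_rootAct (x : AffW n) (α : Root n) : ht (idWin n) (rootAct x α) = ht (win x) α := by
  simp only [ht, idWin, win, rootAct]; ring

/-- The set of inversions of `x`, in terms of windows. -/
def inv (x : AffW n) : Set (Root n) := {α | 0 < ht (idWin n) α ∧ ht (win x) α < 0}

theorem len_eq (x : AffW n) : len x = (inv x).ncard := by
  simp only [len, inv, isPos_iff, isNeg_iff, ht_rootAct]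

theorem inv_finite (x : AffW n) : (inv x).Finite := by
  have key : inv x ⊆ ⋃ i : Fin n, ⋃ j : Fin n,
      (fun k : ℤ => ((i, j, k) : Root n)) ''
        Set.Icc (-|(i : ℤ) - j|) |win x i - win x j| := by
    rintro ⟨i, j, k⟩ ⟨h1, h2⟩
    simp only [ht, idWin] at h1 h2
    simp only [Set.mem_iUnion]
    refine ⟨i, j, k, ⟨?_, ?_⟩, rfl⟩
    · have hn : (1 : ℤ) ≤ n := by have := i.2; omega
      have := neg_abs_le ((i : ℤ) - j)
      have := le_abs_self ((i : ℤ) - j)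
      have := abs_nonneg ((i : ℤ) - j)
      by_contra! hc
      nlinarith
    · have hn : (1 : ℤ) ≤ n := by have := i.2; omega
      have := le_abs_self (win x i - win x j)
      have := abs_nonneg (win x i - win x j)
      by_contra! hc
      nlinarith
  refine Set.Finite.subset ?_ key
  exact Set.finite_iUnion fun i => Set.finite_iUnion fun j => (Set.finite_Icc _ _).image _

/-- The pairing of the root `α` with the coroot of `ε_p - ε_q`. -/
def pair (p q : Fin n) (α : Root n) : ℤ :=
  ((if α.1 = p then 1 else 0) - (if α.1 = q then 1 else 0)) -
    ((if α.2.1 = p then 1 else 0) - (if α.2.1 = q then 1 else 0))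

/-- `s_γ α = α - ⟨α, γ^∨⟩ γ`, evaluated by a window. -/
theorem ht_refl (g : Fin n → ℤ) {p q : Fin n} (hpq : p ≠ q) (k : ℤ) (α : Root n) :
    ht g (rootAct (refl p q k) α) = ht g α - pair p q α * ht g (p, q, k) := by
  obtain ⟨i, j, m⟩ := α
  have hqp := hpq.symm
  simp only [ht, rootAct, refl, pair]
  by_cases h1 : i = p <;> by_cases h2 : i = q <;> by_cases h3 : j = p <;> by_cases h4 : j = q <;>
    first
    | (exfalso; subst_vars; exact hpq rfl)
    | (simp [h1, h2, h3, h4, hpq, hqp, Equiv.swap_apply_of_ne_of_ne]; try ring)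

theorem refl_refl {p q : Fin n} (hpq : p ≠ q) (k : ℤ) (α : Root n) :
    rootAct (refl p q k) (rootAct (refl p q k) α) = α := by
  obtain ⟨i, j, m⟩ := α
  have hqp := hpq.symm
  simp only [rootAct, refl, Equiv.swap_apply_self, Prod.mk.injEq, true_and]
  by_cases h1 : i = p <;> by_cases h2 : i = q <;> by_cases h3 : j = p <;> by_cases h4 : j = q <;>
    first
    | (exfalso; subst_vars; exact hpq rfl)
    | (simp [h1, h2, h3, h4, hqp, Equiv.swap_apply_of_ne_of_ne])

theorem ht_win_mul (x y : AffW n) (α : Root n) :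
    ht (win (mul x y)) α = ht (win x) (rootAct y α) := by
  rw [← ht_rootAct, ← ht_rootAct]
  have h : ∀ a, x.perm⁻¹ (x.perm a) = a := fun a => x.perm.symm_apply_apply a
  simp only [rootAct, mul, ht, Equiv.Perm.coe_mul, Function.comp_apply, h]
  ring

theorem mul_refl_refl (x : AffW n) {p q : Fin n} (hpq : p ≠ q) (k : ℤ) :
    mul (mul x (refl p q k)) (refl p q k) = x := by
  obtain ⟨u, τ⟩ := x
  simp only [mul, refl, AffW.mk.injEq]
  constructor
  · rw [mul_assoc, Equiv.swap_mul_self, mul_one]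
  · funext m
    obtain ⟨a, rfl⟩ := u.surjective m
    have hqp := hpq.symm
    by_cases h1 : a = p
    · simp [h1, hqp]
    · by_cases h2 : a = q
      · simp [h2, hqp]
      · simp [h1, h2, Equiv.swap_apply_of_ne_of_ne]

theorem refl_comm {p q : Fin n} (hpq : p ≠ q) (k : ℤ) : refl p q k = refl q p (-k) := by
  simp only [refl, AffW.mk.injEq]
  refine ⟨Equiv.swap_comm _ _, ?_⟩
  funext m
  by_cases h1 : m = p <;> by_cases h2 : m = q
  · exact absurd (h1.symm.trans h2) hpq
  all_goals simp [h1, h2, hpq, hpq.symm]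

/-- If `γ` and `xγ` are both positive then `ℓ(x) < ℓ(x s_γ)`.  The map sending an inversion `α` of
`x` to `s_γ α` when that root is positive, and to `α` otherwise, is an injection from the
inversions of `x` into the inversions of `x s_γ` other than `γ`. -/
theorem len_lt_of_pos (x : AffW n) {p q : Fin n} (hpq : p ≠ q) (k : ℤ)
    (h1 : 0 < ht (idWin n) (p, q, k)) (h2 : 0 < ht (win x) (p, q, k)) :
    len x < len (mul x (refl p q k)) := by
  classical
  set γ : Root n := (p, q, k)
  set R : Root n → Root n := rootAct (refl p q k) with hR
  have hRR : ∀ α, R (R α) = α := refl_refl hpq k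
  have hpair : pair p q γ = 2 := by simp [pair, γ, hpq, hpq.symm]
  have hRg : ∀ g, ht g (R γ) = - ht g γ := by
    intro g; rw [hR, ht_refl g hpq, hpair]; ring
  set f : Root n → Root n := fun α => if 0 < ht (idWin n) (R α) then R α else α
  have hf : ∀ α ∈ inv x, f α ∈ inv (mul x (refl p q k)) \ {γ} := by
    rintro α ⟨ha, hb⟩
    simp only [f]
    split_ifs with hc
    · refine ⟨⟨hc, ?_⟩, ?_⟩
      · rw [ht_win_mul]; change ht (win x) (R (R α)) < 0; rwa [hRR]
      · intro h
        have h' : R α = γ := h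
        have := hRg (idWin n)
        rw [← h', hRR] at this
        linarith
    · refine ⟨⟨ha, ?_⟩, ?_⟩
      · rw [ht_win_mul, ht_refl _ hpq]
        rw [hR, ht_refl _ hpq] at hc
        -- the pairing is positive, since `s_γ α` would otherwise be positive
        have hm : 0 < pair p q α := by
          by_contra! hm
          apply hc
          nlinarith [mul_nonneg (neg_nonneg.2 hm) h1.le]
        nlinarith [mul_pos hm h2]
      · rintro rfl
        linarith
  have hinj : Set.InjOn f (inv x) := by
    rintro α ⟨ha, -⟩ β ⟨hb, -⟩ h
    simp only [f] at h
    split_ifs at h with hc hd hd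
    · rw [← hRR α, h, hRR]
    · exact absurd (by rw [← h, hRR]; exact ha) hd
    · exact absurd (by rw [h, hRR]; exact hb) hc
    · exact h
  have hγ : γ ∈ inv (mul x (refl p q k)) := by
    refine ⟨h1, ?_⟩
    rw [ht_win_mul]
    change ht (win x) (R γ) < 0
    rw [hRg]; linarith
  rw [len_eq, len_eq, ← Set.ncard_sdiff_singleton_add_one hγ (inv_finite _)]
  exact Nat.lt_succ_of_le (Set.ncard_le_ncard_of_injOn f hf hinj ((inv_finite _).sdiff))

theorem step_of_pos (x : AffW n) {p q : Fin n} (hpq : p ≠ q) (k : ℤ)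
    (h1 : 0 < ht (idWin n) (p, q, k)) (h2 : 0 < ht (win x) (p, q, k)) :
    BruhatStep x (mul x (refl p q k)) :=
  ⟨⟨p, q, k, hpq, rfl⟩, len_lt_of_pos x hpq k h1 h2⟩

/-- `BruhatStep x (x s_γ)` for negative `γ` and `xγ`, as `s_γ = s_{-γ}`. -/
theorem step_of_neg (x : AffW n) {p q : Fin n} (hpq : p ≠ q) (k : ℤ)
    (h1 : ht (idWin n) (p, q, k) < 0) (h2 : ht (win x) (p, q, k) < 0) :
    BruhatStep x (mul x (refl p q k)) := by
  rw [refl_comm hpq]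
  apply step_of_pos x hpq.symm
  · simp only [ht] at *; linarith
  · simp only [ht] at *; linarith

/-! ### Minimal coset representatives -/

theorem bruhatLe_len {a b : AffW n} (h : BruhatLe a b) : a = b ∨ len a < len b := by
  induction h with
  | refl => exact Or.inl rfl
  | tail _ hs ih =>
    rcases ih with rfl | ih
    · exact Or.inr hs.2
    · exact Or.inr (ih.trans hs.2)

theorem win_injective (x : AffW n) : Function.Injective (win x) := by
  intro i j h
  apply x.perm.injective
  simp only [win] at h
  generalize x.perm i = a at *
  generalize x.perm j = b at *
  have ha : (a : ℤ) < n := by exact_mod_cast a.2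
  have hb : (b : ℤ) < n := by exact_mod_cast b.2
  have h2 := congrArg (fun z : ℤ => z % n) h
  simp only [Int.add_mul_emod_self_left] at h2
  rw [Int.emod_eq_of_lt (by positivity) ha, Int.emod_eq_of_lt (by positivity) hb] at h2
  ext; exact_mod_cast h2

/-- If the window of `y` is not increasing, some `y s_{ij}` with `i < j` lies below `y`. -/
theorem exists_step_of_not_strictMono (y : AffW n) (h : ¬ StrictMono (win y)) :
    ∃ x : AffW n, x.tr = y.tr ∧ BruhatStep x y := by
  have : ∃ i j : Fin n, i < j ∧ win y j < win y i := by
    by_contra! hc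
    exact h fun i j hij => lt_of_le_of_ne (hc i j hij) ((win_injective y).ne hij.ne)
  obtain ⟨i, j, hij, hw⟩ := this
  refine ⟨mul y (refl i j 0), ?_, ?_⟩
  · funext m; simp [mul, refl]
  · have := step_of_pos (mul y (refl i j 0)) hij.ne 0 ?_ ?_
    · rwa [mul_refl_refl y hij.ne] at this
    · simp only [ht, idWin]
      have : (i : ℤ) < j := by exact_mod_cast hij
      linarith
    · rw [ht_win_mul, ht_refl _ hij.ne]
      simp only [ht, pair, hij.ne, hij.ne']
      simp only [if_true, if_false]
      linarith

@[simp] theorem minRep_tr (τ : Fin n → ℤ) : (minRep τ).tr = τ := rfl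

theorem len_minRep_le (y : AffW n) : len (minRep y.tr) ≤ len y :=
  (Finset.exists_min_image (Finset.univ : Finset (Equiv.Perm (Fin n)))
      (fun u => len (⟨u, y.tr⟩ : AffW n)) ⟨1, Finset.mem_univ 1⟩).choose_spec.2 y.perm
      (Finset.mem_univ _)

theorem strictMono_minRep (τ : Fin n → ℤ) : StrictMono (win (minRep τ)) := by
  by_contra h
  obtain ⟨x, hx, hs⟩ := exists_step_of_not_strictMono _ h
  have := len_minRep_le x
  rw [hx] at this
  exact absurd hs.2 (not_lt.2 this)

/-- A coset `t_τ Sₙ` contains only one element with increasing window. -/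
theorem eq_of_strictMono {x y : AffW n} (h : x.tr = y.tr) (hx : StrictMono (win x))
    (hy : StrictMono (win y)) : x = y := by
  have hr : ∀ z : AffW n, Set.range (win z) = Set.range fun m : Fin n => (m : ℤ) + n * z.tr m := by
    intro z
    exact z.perm.surjective.range_comp (fun m : Fin n => (m : ℤ) + n * z.tr m)
  have hw : win x = win y := by
    apply (hx.range_inj hy).1
    rw [hr, hr, h]
  obtain ⟨u, τ⟩ := x
  obtain ⟨u', τ'⟩ := y
  obtain rfl : τ = τ' := h
  congr 1
  ext m : 1
  have hinj : Function.Injective fun m : Fin n => (m : ℤ) + n * τ m :=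
    win_injective (⟨1, τ⟩ : AffW n)
  exact hinj (congrFun hw m)

/-- The minimal representative lies below every element of its coset `t_τ Sₙ`. -/
theorem minRep_le (y : AffW n) : BruhatLe (minRep y.tr) y := by
  induction hl : len y using Nat.strong_induction_on generalizing y with
  | _ l ih =>
    by_cases h : StrictMono (win y)
    · rw [eq_of_strictMono (minRep_tr y.tr) (strictMono_minRep _) h]
      exact Relation.ReflTransGen.refl
    · obtain ⟨x, hx, hs⟩ := exists_step_of_not_strictMono y h
      have := ih (len x) (hl ▸ hs.2) x rfl
      rw [hx] at this
      exact this.tail hs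

/-! ### The order on `ℤⁿ` and affine reflections -/

/-- The strict Bruhat order on `ℤⁿ`. -/
def XLt (η μ : Fin n → ℤ) : Prop := XLe η μ ∧ η ≠ μ

theorem XLe.trans_lt {ζ η μ : Fin n → ℤ} (h : XLe ζ η) (h' : XLt η μ) : XLt ζ μ := by
  refine ⟨Relation.ReflTransGen.trans h h'.1, ?_⟩
  rintro rfl
  rcases bruhatLe_len h with h1 | h1
  · exact h'.2 (congrArg AffW.tr h1).symm
  · rcases bruhatLe_len h'.1 with h2 | h2
    · exact h'.2 (congrArg AffW.tr h2)
    · omega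

theorem XLe.refl (η : Fin n → ℤ) : XLe η η := Relation.ReflTransGen.refl

/-- If the positive affine root `β = ε_p - ε_q + k` is positive at `η`, then `η < s_β η`.  With `m`
the minimal representative of `s_β η`, the root `m⁻¹β` has constant term `-β(η) < 0`, so
`s_β m < m`; and `s_β m` lies in the coset of `η`. -/
theorem xlt_of_reflection {η μ : Fin n → ℤ} {p q : Fin n} (hpq : p ≠ q) {k : ℤ}
    (hβ : IsPos ((p, q, k) : Root n)) (hη : 0 < η p - η q + k)
    (hp : μ p = η q - k) (hq : μ q = η p + k)
    (hm : ∀ m, m ≠ p → m ≠ q → μ m = η m) : XLt η μ := by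
  refine ⟨?_, ?_⟩
  · set m' := minRep μ with hm'
    have htr : m'.tr = μ := rfl
    set p' := m'.perm⁻¹ p with hp'
    set q' := m'.perm⁻¹ q with hq'
    have hpq' : p' ≠ q' := fun h => hpq (m'.perm⁻¹.injective h)
    have hup : m'.perm p' = p := by simp [hp']
    have huq : m'.perm q' = q := by simp [hq']
    set k' := -(η p - η q + k) with hk'
    set y := mul m' (AffW.refl p' q' k') with hy
    have hytr : y.tr = η := by
      funext m
      have e1 : m'.perm⁻¹ m = p' ↔ m = p := m'.perm⁻¹.injective.eq_iff
      have e2 : m'.perm⁻¹ m = q' ↔ m = q := m'.perm⁻¹.injective.eq_iff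
      simp only [hy, mul, AffW.refl, e1, e2, htr]
      split_ifs with h1 h2
      · subst h1; rw [hp, hk']; ring
      · subst h2; rw [hq, hk']; ring
      · rw [hm m h1 h2]; ring
    have hstep : BruhatStep y m' := by
      have := step_of_neg y hpq' k' ?_ ?_
      · rwa [hy, mul_refl_refl _ hpq'] at this
      · simp only [ht, idWin]
        have a1 : (q' : ℤ) < n := by exact_mod_cast q'.2
        have a2 : (0 : ℤ) ≤ p' := by positivity
        have a3 : k' ≤ -1 := by omega
        nlinarith
      · rw [hy, ht_win_mul, ht_refl _ hpq']
        have hpair : pair p' q' (p', q', k') = 2 := by simp [pair, hpq', hpq'.symm]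
        rw [hpair]
        rw [isPos_iff] at hβ
        simp only [ht, idWin, win, hup, huq, htr, hp, hq] at hβ ⊢
        rw [hk']
        linarith
    have := minRep_le y
    rw [hytr] at this
    exact this.tail hstep
  · rintro rfl
    omega

end AffW

namespace LP

/-! ### Inversions and simple transpositions -/

section Combinatorics

variable {n : ℕ}

/-- The number of inversions `α` of `w` with `α(τ) ≥ 0`. -/
def cnt (w : Equiv.Perm (Fin (n + 1))) (τ : Fin (n + 1) → ℤ) : ℕ :=
  (Finset.univ.filter (fun p : Fin (n + 1) × Fin (n + 1) =>
    p.1 < p.2 ∧ w p.2 < w p.1 ∧ τ p.2 ≤ τ p.1)).card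

/-- The simple transposition `s_i`. -/
abbrev sw (i : Fin n) : Equiv.Perm (Fin (n + 1)) := Equiv.swap i.castSucc i.succ

/-- `s_i` preserves the order of every pair other than `(i, i+1)`. -/
theorem sw_lt (i : Fin n) {a b : Fin (n + 1)} (h : a < b)
    (hne : ¬ (a = i.castSucc ∧ b = i.succ)) : sw i a < sw i b := by
  simp only [sw, Equiv.swap_apply_def]
  simp only [Fin.ext_iff, Fin.lt_def, Fin.val_castSucc, Fin.val_succ] at h hne ⊢
  split_ifs <;> (try simp only [Fin.val_castSucc, Fin.val_succ]) <;> omega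

/-- If `w s_i > w`, the inversions of `w s_i` are `ε_i - ε_{i+1}` and the images under `s_i` of the
inversions of `w`. -/
theorem cnt_mul_sw (w : Equiv.Perm (Fin (n + 1))) (i : Fin n) (τ : Fin (n + 1) → ℤ)
    (h : w i.castSucc < w i.succ) :
    cnt (w * sw i) τ = cnt w (τ ∘ sw i) + if τ i.succ ≤ τ i.castSucc then 1 else 0 := by
  classical
  have hlt : i.castSucc < i.succ := Fin.castSucc_lt_succ
  have hss : ∀ a, sw i (sw i a) = a := Equiv.swap_apply_self _ _
  set A := Finset.univ.filter (fun p : Fin (n + 1) × Fin (n + 1) =>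
    p.1 < p.2 ∧ (w * sw i) p.2 < (w * sw i) p.1 ∧ τ p.2 ≤ τ p.1) with hA
  set B := Finset.univ.filter (fun p : Fin (n + 1) × Fin (n + 1) =>
    p.1 < p.2 ∧ w p.2 < w p.1 ∧ (τ ∘ sw i) p.2 ≤ (τ ∘ sw i) p.1) with hB
  have memA : ∀ a b, (a, b) ∈ A ↔ a < b ∧ w (sw i b) < w (sw i a) ∧ τ b ≤ τ a := by
    intro a b; rw [hA, Finset.mem_filter]; exact and_iff_right (Finset.mem_univ _)
  have memB : ∀ a b, (a, b) ∈ B ↔ a < b ∧ w b < w a ∧ τ (sw i b) ≤ τ (sw i a) := by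
    intro a b; rw [hB, Finset.mem_filter]; exact and_iff_right (Finset.mem_univ _)
  have herase : (A.erase (i.castSucc, i.succ)).card = B.card := by
    apply Finset.card_nbij' (fun p => (sw i p.1, sw i p.2)) (fun p => (sw i p.1, sw i p.2))
    · rintro ⟨a, b⟩ hab
      rw [Finset.mem_coe, Finset.mem_erase, memA] at hab
      rw [Finset.mem_coe, memB, hss, hss]
      exact ⟨sw_lt i hab.2.1 fun hc => hab.1 (Prod.ext hc.1 hc.2), hab.2.2.1, hab.2.2.2⟩
    · rintro ⟨a, b⟩ hab
      rw [Finset.mem_coe, memB] at hab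
      rw [Finset.mem_coe, Finset.mem_erase, memA, hss, hss]
      refine ⟨?_, sw_lt i hab.1 ?_, hab.2.1, hab.2.2⟩
      · intro hc
        obtain ⟨hc1, hc2⟩ := Prod.mk.inj hc
        have h1 : a = i.succ := by rw [← hss a, hc1]; simp [sw]
        have h2 : b = i.castSucc := by rw [← hss b, hc2]; simp [sw]
        rw [h1, h2] at hab
        exact absurd hab.1 (not_lt.2 hlt.le)
      · rintro ⟨rfl, rfl⟩
        exact absurd hab.2.1 (not_lt.2 h.le)
    · rintro ⟨a, b⟩ -; simp [hss]
    · rintro ⟨a, b⟩ -; simp [hss]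
  have hmem : (i.castSucc, i.succ) ∈ A ↔ τ i.succ ≤ τ i.castSucc := by
    rw [memA]
    simp only [sw, Equiv.swap_apply_left, Equiv.swap_apply_right]
    exact ⟨fun hc => hc.2.2, fun hc => ⟨hlt, h, hc⟩⟩
  change A.card = B.card + _
  split_ifs with hc
  · rw [← herase, Finset.card_erase_add_one (hmem.2 hc)]
  · rw [← herase, Finset.erase_eq_of_notMem fun h => hc (hmem.1 h), add_zero]

/-- The number of inversions of `w`. -/
def ninv (w : Equiv.Perm (Fin (n + 1))) : ℕ :=
  (Finset.univ.filter (fun p : Fin (n + 1) × Fin (n + 1) => p.1 < p.2 ∧ w p.2 < w p.1)).card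

theorem ninv_eq_cnt (w : Equiv.Perm (Fin (n + 1))) : ninv w = cnt w 0 := by
  simp [ninv, cnt]

theorem ninv_mul_sw (w : Equiv.Perm (Fin (n + 1))) (i : Fin n)
    (h : w i.castSucc < w i.succ) : ninv (w * sw i) = ninv w + 1 := by
  rw [ninv_eq_cnt, ninv_eq_cnt, cnt_mul_sw w i 0 h]
  rfl

theorem ninv_mul_sw_of_gt (w : Equiv.Perm (Fin (n + 1))) (i : Fin n)
    (h : ¬ w i.castSucc < w i.succ) : ninv w = ninv (w * sw i) + 1 := by
  have hne : w i.castSucc ≠ w i.succ := w.injective.ne Fin.castSucc_lt_succ.ne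
  have := ninv_mul_sw (w * sw i) i
    (by simpa [sw] using lt_of_le_of_ne (not_lt.1 h) hne.symm)
  rwa [mul_assoc, Equiv.swap_mul_self, mul_one] at this

theorem ninv_prod_le (l : List (Fin n)) : ninv (l.map sw).prod ≤ l.length := by
  induction l using List.reverseRecOn with
  | nil =>
    simp only [ninv, List.map_nil, List.prod_nil, Equiv.Perm.one_apply, List.length_nil,
      nonpos_iff_eq_zero, Finset.card_eq_zero, Finset.filter_eq_empty_iff]
    exact fun p _ hp => absurd hp.1 (not_lt.2 hp.2.le)
  | append_singleton l i ih =>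
    simp only [List.map_append, List.map_cons, List.map_nil, List.prod_append, List.prod_cons,
      List.prod_nil, mul_one, List.length_append, List.length_singleton]
    by_cases h : (l.map sw).prod i.castSucc < (l.map sw).prod i.succ
    · rw [ninv_mul_sw _ _ h]; omega
    · have := ninv_mul_sw_of_gt _ _ h; omega

end Combinatorics

/-! ### Demazure–Lusztig operators on monomials -/

section Operators

variable {N : ℕ}

theorem mono_mul (σ τ : Fin N → ℤ) : (mono σ * mono τ : LP N) = mono (σ + τ) := by
  simp only [mono, AddMonoidAlgebra.single_mul_single, mul_one]
  congr 1
  ext m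
  simp

theorem Xv_eq (j : Fin N) : (Xv j : LP N) = mono (Pi.single j 1) := by
  simp only [Xv, mono]
  congr 1
  ext m
  simp [Finsupp.single_eq_pi_single]

theorem permAct_mono (p q : Fin N) (τ : Fin N → ℤ) :
    permAct (Equiv.swap p q) (mono τ) = mono (τ ∘ Equiv.swap p q) := by
  simp only [permAct, mono, AddMonoidAlgebra.mapDomainRingHom_apply,
    AddMonoidAlgebra.mapDomain_single]
  congr 1
  ext m
  simp [Finsupp.mapDomain_equiv_apply]

theorem Xv_sub_ne_zero {p q : Fin N} (h : p ≠ q) : (Xv p - Xv q : LP N) ≠ 0 := by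
  rw [sub_ne_zero]
  intro he
  simp only [Xv] at he
  have := AddMonoidAlgebra.single_left_injective (one_ne_zero) he
  have := Finsupp.single_left_injective (one_ne_zero) this
  exact h this

/-- The point `τ + t (ε_q - ε_p)`. -/
def shift (p q : Fin N) (τ : Fin N → ℤ) (t : ℕ) : Fin N → ℤ :=
  τ + (t : ℤ) • (Pi.single q 1 - Pi.single p 1)

theorem shift_zero (p q : Fin N) (τ : Fin N → ℤ) : shift p q τ 0 = τ := by
  simp [shift]

theorem shift_left {p q : Fin N} (h : p ≠ q) (τ : Fin N → ℤ) (t : ℕ) :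
    shift p q τ t p = τ p - t := by
  simp [shift, h]; ring

theorem shift_right {p q : Fin N} (h : p ≠ q) (τ : Fin N → ℤ) (t : ℕ) :
    shift p q τ t q = τ q + t := by
  simp [shift, h]

theorem shift_other {p q : Fin N} (τ : Fin N → ℤ) (t : ℕ) {m : Fin N} (hp : m ≠ p)
    (hq : m ≠ q) : shift p q τ t m = τ m := by
  simp [shift, hp, hq]

/-- Reflection at the far end of a segment: if `τ_p - τ_q = d` then
`τ + d (ε_q - ε_p) = s_{pq} τ`. -/
theorem shift_end {p q : Fin N} (h : p ≠ q) (τ : Fin N → ℤ) (d : ℕ) (hd : τ p - τ q = d) :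
    shift p q τ d = τ ∘ Equiv.swap p q := by
  funext m
  by_cases h1 : m = p
  · subst h1; rw [shift_left h]; simp; omega
  · by_cases h2 : m = q
    · subst h2; rw [shift_right h]; simp; omega
    · rw [shift_other τ d h1 h2]; simp [Equiv.swap_apply_of_ne_of_ne h1 h2]

/-- The divided difference of a monomial, as a telescoping sum. -/
theorem telescope (p q : Fin N) (τ : Fin N → ℤ) (d : ℕ) :
    (Xv p - Xv q : LP N) * ∑ t ∈ Finset.range d, mono (shift p q τ t) =
      Xv p * (mono τ - mono (shift p q τ d)) := by
  have h : ∀ t : ℕ, (Xv q * mono (shift p q τ t) : LP N) = Xv p * mono (shift p q τ (t + 1)) := by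
    intro t
    rw [Xv_eq, Xv_eq, mono_mul, mono_mul]
    congr 1
    simp only [shift]
    push_cast
    rw [add_smul, one_smul]
    abel
  induction d with
  | zero => simp [shift_zero]
  | succ d ih =>
    rw [Finset.sum_range_succ, mul_add, ih, sub_mul, h]
    ring

variable {n : ℕ}

/-- `H_i x^τ` when `τ_i ≥ τ_{i+1}`. -/
theorem H_mono_ge {H : Fin n → (LP (n + 1) →ₗ[LL] LP (n + 1))} (hH : IsDL H) (i : Fin n)
    (τ : Fin (n + 1) → ℤ) (d : ℕ) (hd : τ i.castSucc - τ i.succ = d) :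
    H i (mono τ) = (T (-1) : LL) • mono (τ ∘ sw i) +
      (T (-1) - T 1 : LL) • ∑ t ∈ Finset.range d, mono (shift i.castSucc i.succ τ t) := by
  have hne : i.castSucc ≠ i.succ := Fin.castSucc_lt_succ.ne
  apply mul_left_cancel₀ (Xv_sub_ne_zero hne)
  rw [hH i (mono τ), permAct_mono, mul_add, mul_smul_comm, mul_smul_comm, telescope,
    shift_end hne τ d hd]

/-- `H_i x^τ` when `τ_i < τ_{i+1}`. -/
theorem H_mono_lt {H : Fin n → (LP (n + 1) →ₗ[LL] LP (n + 1))} (hH : IsDL H) (i : Fin n)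
    (τ : Fin (n + 1) → ℤ) (d : ℕ) (hd : τ i.succ - τ i.castSucc = d + 1) :
    H i (mono τ) = (T 1 : LL) • mono (τ ∘ sw i) -
      (T (-1) - T 1 : LL) •
        ∑ t ∈ Finset.range d, mono (shift i.castSucc i.succ (τ ∘ sw i) (t + 1)) := by
  have hne : i.castSucc ≠ i.succ := Fin.castSucc_lt_succ.ne
  have hse : shift i.castSucc i.succ (τ ∘ sw i) (d + 1) = τ := by
    rw [shift_end hne _ _ (by simp [sw, hd])]
    funext m; simp
  have ht := telescope i.castSucc i.succ (τ ∘ sw i) (d + 1)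
  rw [hse, Finset.sum_range_succ', shift_zero] at ht
  apply mul_left_cancel₀ (Xv_sub_ne_zero hne)
  rw [hH i (mono τ), permAct_mono, ← neg_sub (mono (τ ∘ sw i)) (mono τ),
    mul_neg (Xv i.castSucc), ← ht]
  simp only [mul_sub, mul_add, mul_smul_comm, sub_smul, smul_add, smul_neg]
  abel

end Operators

/-! ### Triangularity along a reduced word -/

section Triangularity

open AffW

variable {n : ℕ}

/-- The span of the monomials `x^η` with `η < μ`. -/
noncomputable def lower (μ : Fin (n + 1) → ℤ) : Submodule LL (LP (n + 1)) :=
  Submodule.span LL ((fun η : Fin (n + 1) → ℤ => mono η) '' {η | XLt η μ})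

/-- `H_i x^τ` has leading term `v^{±1} x^{s_i τ}`, with exponent `-1` when `τ_i ≥ τ_{i+1}`, and if
`u s_i > u` the other exponents `η` occurring in it satisfy `uη < u s_i τ`. -/
theorem H_mono_sub_mem {H : Fin n → (LP (n + 1) →ₗ[LL] LP (n + 1))} (hH : IsDL H) (i : Fin n)
    (τ : Fin (n + 1) → ℤ) (u : Equiv.Perm (Fin (n + 1))) (hu : u i.castSucc < u i.succ) :
    H i (mono τ) -
      (T (1 - 2 * (if τ i.succ ≤ τ i.castSucc then 1 else 0)) : LL) • mono (τ ∘ sw i) ∈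
      Submodule.span LL ((fun η : Fin (n + 1) → ℤ => (mono η : LP (n + 1))) ''
        {η | XLt (η ∘ ⇑u⁻¹) ((τ ∘ sw i) ∘ ⇑u⁻¹)}) := by
  have hne : i.castSucc ≠ i.succ := Fin.castSucc_lt_succ.ne
  have hother : ∀ (σ : Fin (n + 1) → ℤ) (t : ℕ) (m : Fin (n + 1)), m ≠ u i.castSucc →
      m ≠ u i.succ → shift i.castSucc i.succ σ t (u⁻¹ m) = σ (u⁻¹ m) := by
    intro σ t m h1 h2
    refine shift_other σ t ?_ ?_
    · rintro h; exact h1 (by rw [← h]; simp)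
    · rintro h; exact h2 (by rw [← h]; simp)
  have hother' : ∀ m : Fin (n + 1), m ≠ u i.castSucc →
      m ≠ u i.succ → τ (sw i (u⁻¹ m)) = τ (u⁻¹ m) := by
    intro m h1 h2
    rw [sw, Equiv.swap_apply_of_ne_of_ne]
    · rintro h; exact h1 (by rw [← h]; simp)
    · rintro h; exact h2 (by rw [← h]; simp)
  by_cases hc : τ i.succ ≤ τ i.castSucc
  · obtain ⟨d, hd⟩ := Int.eq_ofNat_of_zero_le (sub_nonneg.2 hc)
    rw [H_mono_ge hH i τ d hd, if_pos hc]
    norm_num only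
    rw [add_sub_cancel_left]
    refine Submodule.smul_mem _ _ (Submodule.sum_mem _ fun t ht => Submodule.subset_span ?_)
    refine ⟨_, ?_, rfl⟩
    rw [Finset.mem_range] at ht
    -- the reflection in `ε_p - ε_q + t` takes `(τ_i - t, τ_{i+1} + t)` to `(τ_{i+1}, τ_i)`
    refine xlt_of_reflection hu.ne (k := t) ?_ ?_ ?_ ?_ ?_
    · rcases Nat.eq_zero_or_pos t with rfl | h
      · exact Or.inr ⟨rfl, hu⟩
      · exact Or.inl (Int.natCast_pos.2 h)
    · simp [shift_left hne, shift_right hne]; omega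
    · simp [shift_right hne]
    · simp [shift_left hne]
    · intro m h1 h2
      simp only [Function.comp_apply]
      rw [hother τ t m h1 h2, hother' m h1 h2]
  · obtain ⟨d, hd⟩ := Int.eq_ofNat_of_zero_le
      (show 0 ≤ τ i.succ - τ i.castSucc - 1 by omega)
    rw [H_mono_lt hH i τ d (by omega), if_neg hc]
    norm_num only
    rw [sub_sub_cancel_left]
    refine Submodule.neg_mem _
      (Submodule.smul_mem _ _ (Submodule.sum_mem _ fun t ht => Submodule.subset_span ?_))
    refine ⟨_, ?_, rfl⟩
    rw [Finset.mem_range] at ht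
    -- the reflection in `ε_q - ε_p + (d - t)` takes the values at `p, q` to `(τ_{i+1}, τ_i)`
    refine xlt_of_reflection hu.ne' (k := (d - t : ℤ)) ?_ ?_ ?_ ?_ ?_
    · exact Or.inl (by simp; omega)
    · simp [shift_left hne, shift_right hne]; omega
    · simp [shift_left hne]; omega
    · simp [shift_right hne]; omega
    · intro m h1 h2
      simp only [Function.comp_apply]
      rw [hother _ (t + 1) m h2 h1, Function.comp_apply]

/-- The operator `H_{i₁} ⋯ H_{i_r}` attached to the word `i₁ ⋯ i_r`. -/
noncomputable def word (H : Fin n → (LP (n + 1) →ₗ[LL] LP (n + 1))) :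
    List (Fin n) → (LP (n + 1) →ₗ[LL] LP (n + 1))
  | [] => LinearMap.id
  | i :: l => H i ∘ₗ word H l

theorem word_apply (H : Fin n → (LP (n + 1) →ₗ[LL] LP (n + 1))) (l : List (Fin n))
    (ξ : LP (n + 1)) : word H l ξ = l.foldr (fun i ξ => H i ξ) ξ := by
  induction l with
  | nil => rfl
  | cons i l ih => simp [word, ih]

theorem word_append_singleton (H : Fin n → (LP (n + 1) →ₗ[LL] LP (n + 1))) (l : List (Fin n))
    (i : Fin n) (ξ : LP (n + 1)) : word H (l ++ [i]) ξ = word H l (H i ξ) := by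
  simp [word_apply]

theorem lower_mono {μ ν : Fin (n + 1) → ℤ} (h : XLt μ ν) : lower μ ≤ lower ν :=
  Submodule.span_mono (Set.image_mono fun _ hη => XLe.trans_lt hη.1 h)

/-- Triangularity for a word `l` whose length is the number of inversions of its product, that is,
a reduced word; by induction on `l` from the right. -/
theorem word_triangular {H : Fin n → (LP (n + 1) →ₗ[LL] LP (n + 1))} (hH : IsDL H)
    (l : List (Fin n)) (hred : ninv (l.map sw).prod = l.length) (τ : Fin (n + 1) → ℤ) :
    word H l (mono τ) - (T ((l.length : ℤ) - 2 * (cnt (l.map sw).prod τ : ℤ)) : LL) •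
      mono (τ ∘ ⇑((l.map sw).prod)⁻¹) ∈ lower (τ ∘ ⇑((l.map sw).prod)⁻¹) := by
  induction l using List.reverseRecOn generalizing τ with
  | nil =>
    have : cnt (1 : Equiv.Perm (Fin (n + 1))) τ = 0 := by
      simp only [cnt, Finset.card_eq_zero, Finset.filter_eq_empty_iff]
      rintro p - ⟨h1, h2, -⟩
      exact absurd h1 (not_lt.2 h2.le)
    simp [word, this]
  | append_singleton l i ih =>
    simp only [List.map_append, List.map_cons, List.map_nil, List.prod_append, List.prod_cons,
      List.prod_nil, mul_one, List.length_append, List.length_singleton] at hred ⊢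
    have hle := ninv_prod_le l
    set u := (l.map sw).prod
    have hu : u i.castSucc < u i.succ := by
      by_contra h
      have := ninv_mul_sw_of_gt _ _ h
      omega
    have hredu : ninv u = l.length := by
      have := ninv_mul_sw u i hu
      omega
    replace ih := ih hredu
    have hcomp : τ ∘ ⇑(u * sw i)⁻¹ = (τ ∘ sw i) ∘ ⇑u⁻¹ := by
      funext m; simp [mul_inv_rev, sw]
    rw [hcomp, word_append_singleton, cnt_mul_sw u i τ hu]
    set μ := (τ ∘ sw i) ∘ ⇑u⁻¹
    set e : ℤ := 1 - 2 * (if τ i.succ ≤ τ i.castSucc then 1 else 0) with he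
    -- the error terms of `H_i x^τ` stay below `μ` under `H_u`
    have h1 : word H l (H i (mono τ) - (T e : LL) • mono (τ ∘ sw i)) ∈ lower μ := by
      have hle : Submodule.span LL ((fun η : Fin (n + 1) → ℤ => (mono η : LP (n + 1))) ''
          {η | XLt (η ∘ ⇑u⁻¹) μ}) ≤ (lower μ).comap (word H l) := by
        rw [Submodule.span_le]
        rintro _ ⟨η, hη, rfl⟩
        change word H l (mono η) ∈ lower μ
        rw [← sub_add_cancel (word H l (mono η))]
        exact Submodule.add_mem _ (lower_mono hη (ih η))
          (Submodule.smul_mem _ _ (Submodule.subset_span ⟨_, hη, rfl⟩))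
      exact hle (H_mono_sub_mem hH i τ u hu)
    have h2 := Submodule.smul_mem _ (T e : LL) (ih (τ ∘ sw i))
    convert Submodule.add_mem _ h1 h2 using 1
    rw [map_sub, map_smul, smul_sub, smul_smul, ← T_add, sub_add_sub_cancel]
    congr 3
    rw [he]
    push_cast
    ring

end Triangularity

end LP

open LP LaurentPolynomial AffW in
/-- Triangularity of Demazure–Lusztig operators: for `w ∈ Sₙ` with reduced word
`w = s_{i₁} ⋯ s_{i_r}` and `τ ∈ ℤⁿ`,
`H_w(x^τ) ∈ v^{ℓ(w) - 2k} x^{w(τ)} + Σ_{η < w(τ)} 𝓛 x^η`, where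
`k = #{α ∈ Δ_f⁺ : wα < 0, α(τ) ≥ 0}` and `<` is the Bruhat order on `ℤⁿ`
induced from the extended affine Weyl group. -/
theorem demazure_lusztig_triangular (n : ℕ)
    (H : Fin n → (LP (n + 1) →ₗ[LL] LP (n + 1))) (hH : IsDL H)
    (l : List (Fin n)) (τ : Fin (n + 1) → ℤ)
    (w : Equiv.Perm (Fin (n + 1)))
    (hw : w = (l.map (fun i => Equiv.swap i.castSucc i.succ)).prod)
    (hred : (Finset.univ.filter
        (fun p : Fin (n + 1) × Fin (n + 1) => p.1 < p.2 ∧ w p.2 < w p.1)).card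
      = l.length) :
    l.foldr (fun i ξ => H i ξ) (mono τ) -
      ((T ((l.length : ℤ) -
          2 * ((Finset.univ.filter (fun p : Fin (n + 1) × Fin (n + 1) =>
            p.1 < p.2 ∧ w p.2 < w p.1 ∧ τ p.2 ≤ τ p.1)).card : ℤ)) : LL)) •
        mono (fun m => τ (w⁻¹ m)) ∈
      Submodule.span LL
        ((fun η : Fin (n + 1) → ℤ => mono η) ''
          {η | XLe η (fun m => τ (w⁻¹ m)) ∧ η ≠ fun m => τ (w⁻¹ m)}) := by
  subst hw
  have h := word_triangular hH l hred τ
  rw [word_apply] at h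
  exact h
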